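/- Let ψ ∈ C⁶([0,π]) satisfy ψ^{(2k)}(0) = ψ^{(2k)}(π) = 0 for k = 0,1,2, with sine coefficients ψ_n := (2/π)∫₀^π ψ(s) sin(ns) ds. Assume Λ_n ≠ 0 for all n ≥ 1. Then the series f̃(x) := Σ_{n≥1} (ψ_n/Λ_n) sin(nx) converges to a function f̃ ∈ C³([0,π]) with f̃(0) = f̃(π) = f̃''(0) = f̃''(π) = 0. -/

import Mathlib

open Real Set

noncomputable section

/-!
Repeated integration by parts gives `ψ⁽⁶⁾_n = -n⁶ ψ_n`, all boundary terms being killed by the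
vanishing of `ψ`, `ψ''`, `ψ⁗` at the endpoints. By Bessel's inequality `ψ⁽⁶⁾_n` is square summable,
so `∑ n⁵ |ψ_n| < ∞` by Cauchy–Schwarz. The kernel `n² e^{-n²(t₀-s)}` is an approximate identity at
`t₀`, so `n² Λ_n → r₀(t₀) ≠ 0`, and division by `Λ_n` costs two powers of `n`: `∑ n³ |ψ_n/Λ_n| < ∞`.
The series may therefore be differentiated three times term by term. Its sum is odd about every
multiple of `π`, hence so is its second derivative, and both vanish there.
-/

section AbelianLimit

open Filter MeasureTheory Topology

theorem integral_mul_exp_neg_mul_sub (k a t : ℝ) :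
    ∫ s in a..t, k * exp (-k * (t - s)) = 1 - exp (-k * (t - a)) := by
  have hderiv (s : ℝ) : HasDerivAt (fun s ↦ exp (-k * (t - s))) (k * exp (-k * (t - s))) s :=
    (((hasDerivAt_id s).const_sub t).const_mul (-k)).exp.congr_deriv (by simp; ring)
  rw [intervalIntegral.integral_eq_sub_of_hasDerivAt (fun s _ ↦ hderiv s)
    (Continuous.intervalIntegrable (by fun_prop) _ _)]
  simp

theorem tendstoUniformlyOn_mul_exp_neg_mul_sub (t : ℝ) {δ : ℝ} (hδ : 0 < δ) :
    TendstoUniformlyOn (fun k s ↦ k * exp (-k * (t - s))) 0 atTop (Iic (t - δ)) := by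
  have hbound : Tendsto (fun k ↦ k * exp (-k * δ)) atTop (𝓝 0) := by
    simpa [mul_comm δ] using tendsto_rpow_mul_exp_neg_mul_atTop_nhds_zero 1 δ hδ
  rw [Metric.tendstoUniformlyOn_iff]
  intro ε hε
  filter_upwards [hbound.eventually_lt_const hε, eventually_ge_atTop 0] with k hkε hk s hs
  have hs : δ ≤ t - s := le_sub_comm.1 hs
  calc dist 0 (k * exp (-k * (t - s))) = k * exp (-k * (t - s)) := by
        rw [dist_zero_left, norm_of_nonneg (by positivity)]
    _ ≤ k * exp (-k * δ) := by
        gcongr k * exp ?_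
        exact mul_le_mul_of_nonpos_left hs (neg_nonpos.2 hk)
    _ < ε := hkε

theorem tendsto_mul_integral_exp_neg_mul_sub {g : ℝ → ℝ} {a t c : ℝ} (hat : a < t)
    (hg : IntervalIntegrable g volume a t) (hlim : Tendsto g (𝓝[<] t) (𝓝 c)) :
    Tendsto (fun k ↦ k * ∫ s in a..t, exp (-k * (t - s)) * g s) atTop (𝓝 c) := by
  have hmass : Tendsto (fun k ↦ ∫ s in Ioo a t, k * exp (-k * (t - s))) atTop (𝓝 1) := by
    simp_rw [← integral_Ioc_eq_integral_Ioo, ← intervalIntegral.integral_of_le hat.le,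
      integral_mul_exp_neg_mul_sub]
    have hexp : Tendsto (fun k : ℝ ↦ exp (-k * (t - a))) atTop (𝓝 0) := by
      simp_rw [neg_mul]
      exact tendsto_exp_neg_atTop_nhds_zero.comp (tendsto_id.atTop_mul_const (sub_pos.2 hat))
    simpa using hexp.const_sub 1
  have haway (u : Set ℝ) (hu : IsOpen u) (htu : t ∈ u) :
      TendstoUniformlyOn (fun k s ↦ k * exp (-k * (t - s))) 0 atTop (Ioo a t \ u) := by
    obtain ⟨l, hl, hlu⟩ := exists_Ioc_subset_of_mem_nhds (hu.mem_nhds htu) ⟨a, hat⟩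
    refine (tendstoUniformlyOn_mul_exp_neg_mul_sub t (sub_pos.2 hl)).mono fun s hs ↦ ?_
    rw [sub_sub_cancel, mem_Iic]
    exact not_lt.1 fun hls ↦ hs.2 (hlu ⟨hls, hs.1.2.le⟩)
  have hpeak := tendsto_setIntegral_peak_smul_of_integrableOn_of_tendsto (x₀ := t)
    measurableSet_Ioo measurableSet_Ioo subset_rfl self_mem_nhdsWithin measure_Ioo_lt_top.ne
    ((eventually_ge_atTop 0).mono fun k hk s _ ↦ by positivity) haway hmass
    (.of_forall fun k ↦ Continuous.aestronglyMeasurable (by fun_prop))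
    ((intervalIntegrable_iff_integrableOn_Ioo_of_le hat.le).1 hg)
    (by rwa [nhdsWithin_Ioo_eq_nhdsLT hat])
  refine hpeak.congr fun k ↦ ?_
  rw [← intervalIntegral.integral_const_mul, intervalIntegral.integral_of_le hat.le,
    integral_Ioc_eq_integral_Ioo]
  simp only [smul_eq_mul, mul_assoc]

end AbelianLimit

section SummabilityOfSequences

open Filter Topology

theorem summable_mul_of_summable_sq {ι : Type*} {u v : ι → ℝ} (hu : Summable fun i ↦ u i ^ 2)
    (hv : Summable fun i ↦ v i ^ 2) : Summable fun i ↦ u i * v i := by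
  refine Summable.of_norm_bounded (hu.add hv) fun i ↦ ?_
  rw [norm_mul, norm_eq_abs, norm_eq_abs, ← sq_abs (u i), ← sq_abs (v i)]
  nlinarith [two_mul_le_add_sq |u i| |v i|, abs_nonneg (u i), abs_nonneg (v i)]

theorem summable_pow_mul_of_le {a : ℕ → ℝ} {p q : ℕ} (hpq : p ≤ q)
    (ha : Summable fun n : ℕ ↦ (n : ℝ) ^ q * a n) : Summable fun n : ℕ ↦ (n : ℝ) ^ p * a n := by
  rw [← summable_nat_add_iff 1] at ha ⊢
  refine ha.abs.of_norm_bounded fun n ↦ ?_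
  rw [norm_eq_abs, abs_mul, abs_mul]
  gcongr
  simp

theorem summable_pow_mul_of_mul_eq {a b Λ : ℕ → ℝ} {c : ℝ} {p q : ℕ}
    (hb : Summable fun n : ℕ ↦ (n : ℝ) ^ (p + q) * b n)
    (hΛ : Tendsto (fun n : ℕ ↦ (n : ℝ) ^ q * Λ n) atTop (𝓝 c)) (hc : c ≠ 0)
    (hab : ∀ᶠ n in atTop, a n * Λ n = b n) : Summable fun n : ℕ ↦ (n : ℝ) ^ p * a n := by
  have hquot : Summable fun n : ℕ ↦ (n : ℝ) ^ (p + q) * b n * ((n : ℝ) ^ q * Λ n)⁻¹ :=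
    hb.norm.mul_tendsto_const (Nat.cofinite_eq_atTop ▸ hΛ.inv₀ hc)
  refine hquot.congr_atTop ?_
  filter_upwards [hab, hΛ.eventually_ne hc] with n hn hne
  rw [← hn, pow_add, mul_inv_eq_iff_eq_mul₀ hne]
  ring

end SummabilityOfSequences

section SineCoefficients

open MeasureTheory

/-- The `n`-th Fourier sine coefficient of a function on `[0, π]`, normalised so that the sine
series of `g` is `∑ sineCoeff g n * sin (n x)`. -/
def sineCoeff (g : ℝ → ℝ) (n : ℕ) : ℝ :=
  2 / π * ∫ x in (0 : ℝ)..π, g x * sin (n * x)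

theorem sineCoeff_secondDeriv {u u₁ u₂ : ℝ → ℝ}
    (hu : ∀ x ∈ Icc 0 π, HasDerivWithinAt u (u₁ x) (Icc 0 π) x)
    (hu₁ : ∀ x ∈ Icc 0 π, HasDerivWithinAt u₁ (u₂ x) (Icc 0 π) x)
    (hu₂ : IntervalIntegrable u₂ volume 0 π) (h0 : u 0 = 0) (hπ : u π = 0) (n : ℕ) :
    sineCoeff u₂ n = -(n : ℝ) ^ 2 * sineCoeff u n := by
  have hu₁_int : IntervalIntegrable u₁ volume 0 π :=
    ContinuousOn.intervalIntegrable_of_Icc pi_nonneg fun x hx ↦ (hu₁ x hx).continuousWithinAt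
  have hlin (x : ℝ) : HasDerivAt (fun x ↦ (n : ℝ) * x) n x := by
    simpa using (hasDerivAt_id x).const_mul (n : ℝ)
  rw [← uIcc_of_le pi_nonneg] at hu hu₁
  have hsin : ∫ x in 0..π, u₁ x * (cos (n * x) * n) = -∫ x in 0..π, u₂ x * sin (n * x) := by
    simpa [sin_nat_mul_pi] using
      intervalIntegral.integral_mul_deriv_eq_deriv_mul_of_hasDerivWithinAt hu₁
        (fun x _ ↦ (hlin x).sin.hasDerivWithinAt) hu₂
        (Continuous.intervalIntegrable (by fun_prop) _ _)
  have hcos : ∫ x in 0..π, u x * (-sin (n * x) * n) = -∫ x in 0..π, u₁ x * cos (n * x) := by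
    simpa [h0, hπ] using
      intervalIntegral.integral_mul_deriv_eq_deriv_mul_of_hasDerivWithinAt hu
        (fun x _ ↦ (hlin x).cos.hasDerivWithinAt) hu₁_int
        (Continuous.intervalIntegrable (by fun_prop) _ _)
  simp only [neg_mul, mul_neg, ← mul_assoc, intervalIntegral.integral_neg,
    intervalIntegral.integral_mul_const] at hsin hcos
  rw [sineCoeff, sineCoeff]
  linear_combination 2 / π * hsin - 2 / π * n * hcos

theorem sineCoeff_eq_im_fourierCoeffOn {g : ℝ → ℝ} (hg : IntervalIntegrable g volume 0 π) (n : ℕ) :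
    sineCoeff g n =
      -4 * (fourierCoeffOn (neg_lt_self pi_pos) ((Ioc 0 π).indicator fun x ↦ (g x : ℂ)) n).im := by
  have hint : IntervalIntegrable (fun x : ℝ ↦ Complex.exp (-(n * x * Complex.I)) * g x)
      volume 0 π :=
    IntervalIntegrable.continuousOn_mul ⟨hg.1.ofReal, hg.2.ofReal⟩ (by fun_prop)
  have hexp (x : ℝ) : fourier (-(n : ℤ)) (x : AddCircle (π - -π)) =
      Complex.exp (-(n * x * Complex.I)) := by
    rw [fourier_coe_apply]
    congr 1
    push_cast
    field_simp
    ring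
  have hzero_ext : ∫ x in -π..π, fourier (-(n : ℤ)) (x : AddCircle (π - -π)) •
      (Ioc 0 π).indicator (fun x ↦ (g x : ℂ)) x =
        ∫ x in (0 : ℝ)..π, Complex.exp (-(n * x * Complex.I)) * g x := by
    simp_rw [smul_eq_mul, hexp,
      ← indicator_mul_right (Ioc 0 π) (fun x : ℝ ↦ Complex.exp (-(n * x * Complex.I)))]
    rw [intervalIntegral.integral_of_le (neg_lt_self pi_pos).le,
      intervalIntegral.integral_of_le pi_nonneg, setIntegral_indicator measurableSet_Ioc,
      inter_eq_right.2 (Ioc_subset_Ioc_left (neg_nonpos.2 pi_nonneg))]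
  have him : (∫ x in (0 : ℝ)..π, Complex.exp (-(n * x * Complex.I)) * g x).im =
      -∫ x in (0 : ℝ)..π, g x * sin (n * x) := by
    rw [← RCLike.im_eq_complex_im, ← intervalIntegral.intervalIntegral_im hint,
      ← intervalIntegral.integral_neg]
    refine intervalIntegral.integral_congr fun x _ ↦ ?_
    simp [Complex.exp_im, mul_comm]
  rw [fourierCoeffOn_eq_integral, hzero_ext, Complex.smul_im, him, sineCoeff, smul_eq_mul]
  field_simp
  ring

theorem summable_sq_sineCoeff {g : ℝ → ℝ} (hg : MemLp g 2 (volume.restrict (Ioc 0 π))) :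
    Summable fun n ↦ sineCoeff g n ^ 2 := by
  have hg_int : IntervalIntegrable g volume 0 π :=
    (intervalIntegrable_iff_integrableOn_Ioc_of_le pi_nonneg).2 (hg.integrable one_le_two)
  have hg_complex : MemLp (fun x ↦ (g x : ℂ)) 2 (volume.restrict (Ioc 0 π)) := hg.ofReal
  have hzero_ext : MemLp ((Ioc 0 π).indicator fun x ↦ (g x : ℂ)) 2
      (volume.restrict (Ioc (-π) π)) :=
    ((memLp_indicator_iff_restrict measurableSet_Ioc).2 hg_complex).restrict _
  have hBessel := (hasSum_sq_fourierCoeffOn (neg_lt_self pi_pos) hzero_ext).summable.comp_injective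
    (Nat.cast_injective (R := ℤ))
  refine (hBessel.mul_left ((-4) ^ 2)).of_nonneg_of_le (fun n ↦ sq_nonneg _) fun n ↦ ?_
  rw [sineCoeff_eq_im_fourierCoeffOn hg_int, mul_pow, Function.comp_apply]
  exact mul_le_mul_of_nonneg_left
    (sq_le_sq.2 ((Complex.abs_im_le_norm _).trans (le_abs_self _))) (sq_nonneg _)

theorem summable_pow_five_mul_sineCoeff {ψ ψ₁ ψ₂ ψ₃ ψ₄ ψ₅ ψ₆ : ℝ → ℝ}
    (hψ : ∀ x ∈ Icc 0 π, HasDerivWithinAt ψ (ψ₁ x) (Icc 0 π) x)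
    (hψ₁ : ∀ x ∈ Icc 0 π, HasDerivWithinAt ψ₁ (ψ₂ x) (Icc 0 π) x)
    (hψ₂ : ∀ x ∈ Icc 0 π, HasDerivWithinAt ψ₂ (ψ₃ x) (Icc 0 π) x)
    (hψ₃ : ∀ x ∈ Icc 0 π, HasDerivWithinAt ψ₃ (ψ₄ x) (Icc 0 π) x)
    (hψ₄ : ∀ x ∈ Icc 0 π, HasDerivWithinAt ψ₄ (ψ₅ x) (Icc 0 π) x)
    (hψ₅ : ∀ x ∈ Icc 0 π, HasDerivWithinAt ψ₅ (ψ₆ x) (Icc 0 π) x)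
    (hψ₆ : MemLp ψ₆ 2 (volume.restrict (Ioc 0 π)))
    (hbdry : ψ 0 = 0 ∧ ψ π = 0 ∧ ψ₂ 0 = 0 ∧ ψ₂ π = 0 ∧ ψ₄ 0 = 0 ∧ ψ₄ π = 0) :
    Summable fun n : ℕ ↦ (n : ℝ) ^ 5 * sineCoeff ψ n := by
  obtain ⟨h0, hπ, h0₂, hπ₂, h0₄, hπ₄⟩ := hbdry
  have hψ₂_int : IntervalIntegrable ψ₂ volume 0 π :=
    ContinuousOn.intervalIntegrable_of_Icc pi_nonneg fun x hx ↦ (hψ₂ x hx).continuousWithinAt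
  have hψ₄_int : IntervalIntegrable ψ₄ volume 0 π :=
    ContinuousOn.intervalIntegrable_of_Icc pi_nonneg fun x hx ↦ (hψ₄ x hx).continuousWithinAt
  have hψ₆_int : IntervalIntegrable ψ₆ volume 0 π :=
    (intervalIntegrable_iff_integrableOn_Ioc_of_le pi_nonneg).2 (hψ₆.integrable one_le_two)
  have hcoeff (n : ℕ) : sineCoeff ψ₆ n = -(n : ℝ) ^ 6 * sineCoeff ψ n := by
    rw [sineCoeff_secondDeriv hψ₄ hψ₅ hψ₆_int h0₄ hπ₄,
      sineCoeff_secondDeriv hψ₂ hψ₃ hψ₄_int h0₂ hπ₂, sineCoeff_secondDeriv hψ hψ₁ hψ₂_int h0 hπ]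
    ring
  have hinv : Summable fun n : ℕ ↦ (-(n : ℝ)⁻¹) ^ 2 := by
    simp only [neg_sq, inv_pow]
    exact summable_nat_pow_inv.2 one_lt_two
  refine (summable_mul_of_summable_sq (summable_sq_sineCoeff hψ₆) hinv).congr fun n ↦ ?_
  rcases eq_or_ne n 0 with rfl | hn
  · simp
  · rw [hcoeff]
    field_simp

end SineCoefficients

section SineSeries

theorem iteratedDeriv_eq_zero_of_odd_reflection {f : ℝ → ℝ} {c : ℝ} {k : ℕ} (hk : Even k)
    (hf : ∀ x, f (2 * c - x) = -f x) : iteratedDeriv k f c = 0 := by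
  have hreflect : iteratedDeriv k (fun x ↦ f (2 * c - x)) c = iteratedDeriv k f c := by
    rw [iteratedDeriv_comp_const_sub]
    simp [hk.neg_one_pow, two_mul]
  simp only [hf, iteratedDeriv_fun_neg] at hreflect
  exact self_eq_neg.1 hreflect.symm

theorem abs_iteratedDeriv_mul_sin_le (a ω : ℝ) (k : ℕ) (x : ℝ) :
    |iteratedDeriv k (fun x ↦ a * sin (ω * x)) x| ≤ |ω ^ k * a| := by
  rw [iteratedDeriv_const_mul_field, iteratedDeriv_comp_const_mul contDiff_sin, abs_mul, abs_mul,
    abs_mul, mul_left_comm, ← mul_assoc]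
  exact mul_le_of_le_one_right (by positivity) (abs_iteratedDeriv_sin_le_one k _)

theorem contDiff_tsum_mul_sin {ι : Type*} {a ω : ι → ℝ} {N : ℕ}
    (h : ∀ k ≤ N, Summable fun i ↦ ω i ^ k * a i) :
    ContDiff ℝ N fun x ↦ ∑' i, a i * sin (ω i * x) := by
  refine contDiff_tsum (N := (N : ℕ∞)) (v := fun k i ↦ |ω i ^ k * a i|) (fun i ↦ by fun_prop)
    (fun k hk ↦ (h k (mod_cast hk)).abs) fun k i x _ ↦ ?_
  rw [norm_iteratedFDeriv_eq_norm_iteratedDeriv]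
  exact abs_iteratedDeriv_mul_sin_le (a i) (ω i) k x

/-- The sum of the sine series `∑_{n ≥ 1} a n * sin (n x)`; the sum over `ℕ` is shifted by one, so
`a 0` is ignored. -/
def sineSeries (a : ℕ → ℝ) (x : ℝ) : ℝ :=
  ∑' n : ℕ, a (n + 1) * sin (((n : ℝ) + 1) * x)

variable {a : ℕ → ℝ}

theorem summable_mul_sin (ha : Summable a) (x : ℝ) :
    Summable fun n : ℕ ↦ a (n + 1) * sin (((n : ℝ) + 1) * x) := by
  refine ((summable_nat_add_iff 1).2 ha.abs).of_norm_bounded fun n ↦ ?_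
  rw [norm_mul]
  exact mul_le_of_le_one_right (norm_nonneg _) (abs_sin_le_one _)

theorem contDiff_sineSeries {N : ℕ} (ha : Summable fun n : ℕ ↦ (n : ℝ) ^ N * a n) :
    ContDiff ℝ N (sineSeries a) :=
  contDiff_tsum_mul_sin fun k hk ↦ by
    simpa using (summable_nat_add_iff 1).2 (summable_pow_mul_of_le hk ha)

theorem sineSeries_two_mul_int_mul_pi_sub (a : ℕ → ℝ) (m : ℤ) (x : ℝ) :
    sineSeries a (2 * (m * π) - x) = -sineSeries a x := by
  rw [sineSeries, sineSeries, ← tsum_neg]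
  congr! 2 with n
  have hperiod := sin_int_mul_two_pi_sub (((n : ℝ) + 1) * x) ((n + 1) * m)
  push_cast at hperiod
  rw [← mul_neg, ← hperiod]
  ring_nf

theorem iteratedDeriv_sineSeries_int_mul_pi (a : ℕ → ℝ) {k : ℕ} (hk : Even k) (m : ℤ) :
    iteratedDeriv k (sineSeries a) (m * π) = 0 :=
  iteratedDeriv_eq_zero_of_odd_reflection hk (sineSeries_two_mul_int_mul_pi_sub a m)

end SineSeries

section Regularity

open Filter MeasureTheory Topology

theorem hasDerivAt_iteratedDeriv {f : ℝ → ℝ} {N k : ℕ} (hf : ContDiff ℝ N f) (hk : k < N) (x : ℝ) :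
    HasDerivAt (iteratedDeriv k f) (iteratedDeriv (k + 1) f x) x := by
  rw [iteratedDeriv_succ]
  exact (hf.differentiable_iteratedDeriv k (mod_cast hk) x).hasDerivAt

theorem ftilde_regularity_general {r₀ : ℝ → ℝ} {t₀ c : ℝ} (ht₀ : 0 < t₀)
    (hr₀ : IntervalIntegrable r₀ volume 0 t₀) (hlim : Tendsto r₀ (𝓝[<] t₀) (𝓝 c)) (hc : c ≠ 0)
    {Λ : ℕ → ℝ} (hΛ : ∀ n : ℕ, Λ n = ∫ s in 0..t₀, exp (-(n : ℝ) ^ 2 * (t₀ - s)) * r₀ s)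
    {ψ ψ₁ ψ₂ ψ₃ ψ₄ ψ₅ ψ₆ : ℝ → ℝ}
    (hψ : ∀ x ∈ Icc 0 π, HasDerivWithinAt ψ (ψ₁ x) (Icc 0 π) x)
    (hψ₁ : ∀ x ∈ Icc 0 π, HasDerivWithinAt ψ₁ (ψ₂ x) (Icc 0 π) x)
    (hψ₂ : ∀ x ∈ Icc 0 π, HasDerivWithinAt ψ₂ (ψ₃ x) (Icc 0 π) x)
    (hψ₃ : ∀ x ∈ Icc 0 π, HasDerivWithinAt ψ₃ (ψ₄ x) (Icc 0 π) x)
    (hψ₄ : ∀ x ∈ Icc 0 π, HasDerivWithinAt ψ₄ (ψ₅ x) (Icc 0 π) x)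
    (hψ₅ : ∀ x ∈ Icc 0 π, HasDerivWithinAt ψ₅ (ψ₆ x) (Icc 0 π) x)
    (hψ₆ : MemLp ψ₆ 2 (volume.restrict (Ioc 0 π)))
    (hbdry : ψ 0 = 0 ∧ ψ π = 0 ∧ ψ₂ 0 = 0 ∧ ψ₂ π = 0 ∧ ψ₄ 0 = 0 ∧ ψ₄ π = 0)
    {a : ℕ → ℝ} (ha : ∀ n, 1 ≤ n → a n * Λ n = sineCoeff ψ n) :
    (∀ x, Summable fun n : ℕ ↦ a (n + 1) * sin (((n : ℝ) + 1) * x)) ∧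
      ContDiff ℝ 3 (sineSeries a) ∧
      ∀ m : ℤ, sineSeries a (m * π) = 0 ∧ iteratedDeriv 2 (sineSeries a) (m * π) = 0 := by
  have hΛ_lim : Tendsto (fun n : ℕ ↦ (n : ℝ) ^ 2 * Λ n) atTop (𝓝 c) := by
    simp_rw [hΛ]
    exact (tendsto_mul_integral_exp_neg_mul_sub ht₀ hr₀ hlim).comp
      ((tendsto_pow_atTop two_ne_zero).comp tendsto_natCast_atTop_atTop)
  have ha_sum : Summable fun n : ℕ ↦ (n : ℝ) ^ 3 * a n :=
    summable_pow_mul_of_mul_eq (p := 3) (q := 2)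
      (summable_pow_five_mul_sineCoeff hψ hψ₁ hψ₂ hψ₃ hψ₄ hψ₅ hψ₆ hbdry)
      hΛ_lim hc ((eventually_ge_atTop 1).mono ha)
  refine ⟨summable_mul_sin ?_, contDiff_sineSeries ha_sum, fun m ↦ ⟨?_, ?_⟩⟩
  · simpa using summable_pow_mul_of_le (Nat.zero_le 3) ha_sum
  · simpa using iteratedDeriv_sineSeries_int_mul_pi a Even.zero m
  · exact iteratedDeriv_sineSeries_int_mul_pi a even_two m

end Regularity

/-- For `ψ ∈ C⁶([0,π])` with `ψ^{(2k)}(0) = ψ^{(2k)}(π) = 0`, `k = 0,1,2`, and `Λ_n ≠ 0`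
for all `n ≥ 1`, the series `f̃(x) = Σ (ψ_n/Λ_n) sin nx` converges to a `C³` function
with `f̃(0) = f̃(π) = f̃''(0) = f̃''(π) = 0`. -/
theorem ftilde_regularity
    (T : ℝ) (hT : 0 < T)
    (r0 : ℝ → ℝ) (hr0 : ContinuousOn r0 (Icc 0 T))
    (t₀ : ℝ) (ht₀ : t₀ ∈ Ioc 0 T) (hr0t₀ : r0 t₀ ≠ 0)
    (Λ : ℕ → ℝ)
    (hΛ : ∀ n : ℕ, Λ n = ∫ s in (0:ℝ)..t₀, exp (-(n:ℝ) ^ 2 * (t₀ - s)) * r0 s)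
    (hΛne : ∀ n : ℕ, 1 ≤ n → Λ n ≠ 0)
    -- `ψ ∈ C⁶([0,π])` with the boundary conditions
    (ψ ψ1 ψ2 ψ3 ψ4 ψ5 ψ6 : ℝ → ℝ)
    (hψ1 : ∀ x ∈ Icc (0:ℝ) π, HasDerivWithinAt ψ (ψ1 x) (Icc 0 π) x)
    (hψ2 : ∀ x ∈ Icc (0:ℝ) π, HasDerivWithinAt ψ1 (ψ2 x) (Icc 0 π) x)
    (hψ3 : ∀ x ∈ Icc (0:ℝ) π, HasDerivWithinAt ψ2 (ψ3 x) (Icc 0 π) x)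
    (hψ4 : ∀ x ∈ Icc (0:ℝ) π, HasDerivWithinAt ψ3 (ψ4 x) (Icc 0 π) x)
    (hψ5 : ∀ x ∈ Icc (0:ℝ) π, HasDerivWithinAt ψ4 (ψ5 x) (Icc 0 π) x)
    (hψ6 : ∀ x ∈ Icc (0:ℝ) π, HasDerivWithinAt ψ5 (ψ6 x) (Icc 0 π) x)
    (hψ6c : ContinuousOn ψ6 (Icc 0 π))
    (hψb : ψ 0 = 0 ∧ ψ π = 0 ∧ ψ2 0 = 0 ∧ ψ2 π = 0 ∧ ψ4 0 = 0 ∧ ψ4 π = 0)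
    (ψc : ℕ → ℝ)
    (hψc : ∀ n : ℕ, ψc n = (2 / π) * ∫ s in (0:ℝ)..π, ψ s * sin ((n:ℝ) * s))
    (ftilde : ℝ → ℝ)
    (hft : ∀ x, ftilde x = ∑' n : ℕ, ψc (n + 1) / Λ (n + 1) * sin (((n:ℝ) + 1) * x)) :
    -- the series converges ...
    (∀ x ∈ Icc (0:ℝ) π,
      Summable fun n : ℕ => ψc (n + 1) / Λ (n + 1) * sin (((n:ℝ) + 1) * x)) ∧
    -- ... to a `C³` function with the boundary conditions
    ∃ g1 g2 g3 : ℝ → ℝ,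
      (∀ x ∈ Icc (0:ℝ) π, HasDerivWithinAt ftilde (g1 x) (Icc 0 π) x) ∧
      (∀ x ∈ Icc (0:ℝ) π, HasDerivWithinAt g1 (g2 x) (Icc 0 π) x) ∧
      (∀ x ∈ Icc (0:ℝ) π, HasDerivWithinAt g2 (g3 x) (Icc 0 π) x) ∧
      ContinuousOn g3 (Icc 0 π) ∧
      ftilde 0 = 0 ∧ ftilde π = 0 ∧ g2 0 = 0 ∧ g2 π = 0 := by
  have hr0_int : IntervalIntegrable r0 MeasureTheory.volume 0 t₀ :=
    (hr0.mono (Icc_subset_Icc_right ht₀.2)).intervalIntegrable_of_Icc ht₀.1.le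
  have hr0_lim : Filter.Tendsto r0 (nhdsWithin t₀ (Iio t₀)) (nhds (r0 t₀)) := by
    rw [← nhdsWithin_Ioo_eq_nhdsLT ht₀.1]
    exact (hr0 t₀ (Ioc_subset_Icc_self ht₀)).mono fun s hs ↦ ⟨hs.1.le, hs.2.le.trans ht₀.2⟩
  have hψ6_memLp : MeasureTheory.MemLp ψ6 2 (MeasureTheory.volume.restrict (Ioc 0 π)) :=
    (MeasureTheory.memLp_two_iff_integrable_sq ((hψ6c.mono Ioc_subset_Icc_self).aestronglyMeasurable
      measurableSet_Ioc)).2 ((hψ6c.pow 2).integrableOn_Icc.mono_set Ioc_subset_Icc_self)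
  obtain ⟨hsum, hsmooth, hzero⟩ := ftilde_regularity_general ht₀.1 hr0_int hr0_lim hr0t₀ hΛ
    hψ1 hψ2 hψ3 hψ4 hψ5 hψ6 hψ6_memLp hψb
    (a := fun n ↦ ψc n / Λ n) fun n hn ↦ (div_mul_cancel₀ _ (hΛne n hn)).trans (hψc n)
  rw [← show ftilde = sineSeries fun n ↦ ψc n / Λ n from funext hft] at hsmooth hzero
  have hderiv (k : ℕ) (hk : k < 3) (x : ℝ) :=
    (hasDerivAt_iteratedDeriv hsmooth hk x).hasDerivWithinAt (s := Icc 0 π)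
  refine ⟨fun x _ ↦ hsum x, iteratedDeriv 1 ftilde, iteratedDeriv 2 ftilde, iteratedDeriv 3 ftilde,
    fun x _ ↦ ?_, fun x _ ↦ hderiv 1 (by decide) x, fun x _ ↦ hderiv 2 (by decide) x,
    (hsmooth.continuous_iteratedDeriv' 3).continuousOn, ?_⟩
  · simpa only [iteratedDeriv_zero] using hderiv 0 (by decide) x
  · obtain ⟨h0, h0''⟩ := hzero 0
    obtain ⟨hπ, hπ''⟩ := hzero 1
    simp only [Int.cast_zero, zero_mul, Int.cast_one, one_mul] at h0 h0'' hπ hπ''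
    exact ⟨h0, hπ, h0'', hπ''⟩
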